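/- Fix δ > 0 and p > p_c(d). Then P-almost surely, for every n large enough, every ball of radius δn contained in the box [−n,n]^d contains at least δ^d (2n)^d θ(p)/2 points of the infinite cluster C_∞(ω), where θ(p) = P(0 ∈ C_∞) is the percolation density. -/

import Mathlib

open MeasureTheory ProbabilityTheory Filter Topology
open scoped ENNReal NNReal BigOperators

noncomputable section

namespace SRWPC

/-- Vertices of the lattice `ℤ^d`. -/
abbrev V (d : ℕ) := Fin d → ℤ

/-- Index of a nearest-neighbour bond: the bond from `x` to `x + eᵢ`. -/
abbrev EdgeIx (d : ℕ) := V d × Fin d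

/-- Percolation configurations `Ω = {0,1}^{𝔹_d}`. -/
abbrev Config (d : ℕ) := EdgeIx d → Bool

/-- The `i`-th coordinate unit vector. -/
def unitVec (d : ℕ) (i : Fin d) : V d := fun j => if j = i then 1 else 0

/-- The set `𝕌_d` of the `2d` unit vectors. -/
def Ud (d : ℕ) : Finset (V d) :=
  (Finset.univ.image (unitVec d)) ∪ (Finset.univ.image (fun i => -unitVec d i))

/-- The type of nearest-neighbour steps (elements of `𝕌_d`). -/
abbrev Step (d : ℕ) := {e : V d // e ∈ Ud d}

/-- The shift `(τ_x ω)_b = ω_{x+b}`. -/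
def shift {d : ℕ} (x : V d) (ω : Config d) : Config d := fun b => ω (b.1 + x, b.2)

/-- The bond from `x` to `x + e` is open in `ω`. -/
def edgeOpen {d : ℕ} (ω : Config d) (x e : V d) : Prop :=
  ∃ i : Fin d, (e = unitVec d i ∧ ω (x, i) = true) ∨
    (e = -unitVec d i ∧ ω (x - unitVec d i, i) = true)

open Classical in
/-- The number of open bonds incident to `x`. -/
def openDeg {d : ℕ} (ω : Config d) (x : V d) : ℕ :=
  ((Ud d).filter (fun e => edgeOpen ω x e)).card

open Classical in
/-- The transition probability `π_ω(x,e)` of the simple random walk on the cluster. -/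
def trans {d : ℕ} (ω : Config d) (x e : V d) : ℝ :=
  if edgeOpen ω x e then 1 / openDeg ω x else 0

/-- `γ` restricted to `{0,…,n}` is a nearest-neighbour open path in `ω`. -/
def IsOpenPath {d : ℕ} (ω : Config d) (γ : ℕ → V d) (n : ℕ) : Prop :=
  ∀ k < n, (γ (k + 1) - γ k) ∈ Ud d ∧ edgeOpen ω (γ k) (γ (k + 1) - γ k)

/-- `x` lies in the box `[-r,r]^d`. -/
def inBox {d : ℕ} (x : V d) (r : ℝ) : Prop := ∀ i, |(x i : ℝ)| ≤ r

/-- `x` is joined to infinity by a nearest-neighbour open path, i.e. `x ∈ 𝒞_∞(ω)`. -/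
def memCluster {d : ℕ} (ω : Config d) (x : V d) : Prop :=
  ∀ R : ℕ, ∃ (γ : ℕ → V d) (n : ℕ), γ 0 = x ∧ IsOpenPath ω γ n ∧ ¬ inBox (γ n) R

/-- The event `Ω_0 = {0 ∈ 𝒞_∞}`. -/
def cluZero (d : ℕ) : Set (Config d) := {ω | memCluster ω 0}

/-- `P` is the Bernoulli bond percolation product measure with parameter `q`. -/
def IsBernoulli (d : ℕ) (q : ℝ) (P : Measure (Config d)) : Prop :=
  IsProbabilityMeasure P ∧
    ∀ (F : Finset (EdgeIx d)) (a : EdgeIx d → Bool),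
      P {ω | ∀ b ∈ F, ω b = a b} = ∏ b ∈ F, ENNReal.ofReal (if a b then q else 1 - q)

/-- The critical probability `p_c(d)` of bond percolation on `ℤ^d`. -/
def pc (d : ℕ) : ℝ :=
  sInf {q : ℝ | q ∈ Set.Icc (0 : ℝ) 1 ∧
    ∀ P : Measure (Config d), IsBernoulli d q P → 0 < P (cluZero d)}

variable {d : ℕ}

/-- Position of the walk after `k` steps, given the sequence of steps `s`. -/
def pos {n : ℕ} (s : Fin n → Step d) (k : ℕ) : V d :=
  ∑ j ∈ Finset.univ.filter (fun j : Fin n => (j : ℕ) < k), (s j).1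

/-- The environment/step pair `(τ_{X_k} ω, X_{k+1} - X_k)` seen at time `k`. -/
def envPair (ω : Config d) {n : ℕ} (s : Fin n → Step d) (k : Fin n) : Config d × Step d :=
  (shift (pos s k) ω, s k)

/-- Quenched probability of a given sequence of `n` steps under the Markov kernel `κ`. -/
def pathProb (κ : Config d → Step d → ℝ) (ω : Config d) {n : ℕ} (s : Fin n → Step d) : ℝ :=
  ∏ k : Fin n, κ (shift (pos s k) ω) (s k)

/-- The SRWPC transition kernel `π`. -/
def srw (d : ℕ) : Config d → Step d → ℝ := fun ω e => trans ω 0 e.1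

/-- Quenched expectation (under `P_0^{κ,ω}`) of a functional of the first `n` steps. -/
def qE (κ : Config d → Step d → ℝ) (ω : Config d) {n : ℕ} (F : (Fin n → Step d) → ℝ) : ℝ :=
  ∑ s : Fin n → Step d, pathProb κ ω s * F s

/-- Quenched probability (under `P_0^{κ,ω}`) of a set of `n`-step trajectories. -/
def qP (κ : Config d → Step d → ℝ) (ω : Config d) {n : ℕ} (A : Set (Fin n → Step d)) : ℝ :=
  ∑ s : Fin n → Step d, A.indicator (fun s' => pathProb κ ω s') s

/-- Quenched probability, `ℝ≥0∞`-valued. -/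
def qPE (κ : Config d → Step d → ℝ) (ω : Config d) {n : ℕ} (A : Set (Fin n → Step d)) : ℝ≥0∞ :=
  ENNReal.ofReal (qP κ ω A)

/-- The environment-step space `Ω_0 × 𝕌_d`. -/
abbrev EnvSp (d : ℕ) := Config d × Step d

/-- The pair empirical measure `ℒ_n` as a measure. -/
def empMeas (ω : Config d) {n : ℕ} (s : Fin n → Step d) : Measure (EnvSp d) :=
  (n : ℝ≥0∞)⁻¹ • ∑ k : Fin n, Measure.dirac (envPair ω s k)

lemma empMeas_isProb (ω : Config d) {n : ℕ} (hn : n ≠ 0) (s : Fin n → Step d) :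
    IsProbabilityMeasure (empMeas ω s) := by
  constructor
  simp only [empMeas, Measure.smul_apply, Measure.coe_finset_sum, Finset.sum_apply,
    Measure.dirac_apply_of_mem (Set.mem_univ _), smul_eq_mul]
  rw [Finset.sum_const, Finset.card_univ, Fintype.card_fin, nsmul_eq_mul, mul_one,
    ENNReal.inv_mul_cancel]
  · exact_mod_cast hn
  · exact ENNReal.natCast_ne_top n

/-- The pair empirical measure `ℒ_{n+1}` as a probability measure. -/
def empPM (ω : Config d) {n : ℕ} (s : Fin (n + 1) → Step d) : ProbabilityMeasure (EnvSp d) :=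
  ⟨empMeas ω s, empMeas_isProb ω (Nat.succ_ne_zero n) s⟩

/-- First marginal `(μ)_1` of a measure on `Ω_0 × 𝕌_d`. -/
def marg1 (μ : Measure (EnvSp d)) : Measure (Config d) := μ.map Prod.fst

/-- Second marginal `(μ)_2` of a measure on `Ω_0 × 𝕌_d`. -/
def marg2 (μ : Measure (EnvSp d)) : Measure (Config d) := μ.map (fun q => shift q.2.1 q.1)

/-- The slice `dμ(·, e)` of a measure on `Ω_0 × 𝕌_d` at a fixed step `e`. -/
def slice (μ : Measure (EnvSp d)) (e : Step d) : Measure (Config d) :=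
  (μ.restrict (Set.univ ×ˢ {e})).map Prod.fst

/-- The space `ℳ_1⋆`: probability measures on `Ω_0 × 𝕌_d` whose two marginals coincide and
are absolutely continuous w.r.t. `P₀`, and whose densities `dμ(ω,e)/d(μ)_1(ω)` are positive
precisely on open edges, `P₀`-a.s. -/
def M1star (d : ℕ) (P₀ : Measure (Config d)) : Set (ProbabilityMeasure (EnvSp d)) :=
  {μ | marg1 μ.toMeasure = marg2 μ.toMeasure ∧ marg1 μ.toMeasure ≪ P₀ ∧
    ∃ ρ : Step d → Config d → ℝ≥0∞, (∀ e, Measurable (ρ e)) ∧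
      (∀ e, slice μ.toMeasure e = (marg1 μ.toMeasure).withDensity (ρ e)) ∧
      (∀ e : Step d, ∀ᵐ ω ∂P₀, (0 < ρ e ω ↔ edgeOpen ω 0 e.1))}

/-- The reference measure `π_ω(0,e) d(μ)_1(ω)` on `Ω_0 × 𝕌_d`. -/
def refM (μ : Measure (EnvSp d)) : Measure (EnvSp d) :=
  Measure.sum (fun e : Step d =>
    ((marg1 μ).withDensity (fun ω => ENNReal.ofReal (trans ω 0 e.1))).map (fun ω => (ω, e)))

/-- `x log x - x + 1`. -/
def klFun (x : ℝ) : ℝ := x * Real.log x - x + 1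

open Classical in
/-- The entropy functional `ℑ` (a relative entropy with respect to `refM μ`;
it equals `∫ Σ_e dμ(ω,e) log[dμ(ω,e) / (d(μ)_1(ω) π_ω(0,e))]` on `ℳ_1⋆` and `∞` otherwise). -/
def entI (P₀ : Measure (Config d)) (μ : ProbabilityMeasure (EnvSp d)) : ℝ≥0∞ :=
  if μ ∈ M1star d P₀ ∧ μ.toMeasure ≪ refM μ.toMeasure then
    ∫⁻ q, ENNReal.ofReal (klFun ((μ.toMeasure.rnDeriv (refM μ.toMeasure)) q).toReal)
      ∂(refM μ.toMeasure)
  else ∞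

/-- The pairing `⟨f, μ⟩`. -/
def pairing (f : EnvSp d → ℝ) (μ : ProbabilityMeasure (EnvSp d)) : ℝ :=
  ∫ q, f q ∂μ.toMeasure

/-- The Fenchel–Legendre transform `ℑ⋆` of `ℑ`. -/
def entIstar (P₀ : Measure (Config d)) (f : BoundedContinuousFunction (EnvSp d) ℝ) : EReal :=
  ⨆ μ : ProbabilityMeasure (EnvSp d),
    ((pairing f μ : ℝ) : EReal) - ((entI P₀ μ : ℝ≥0∞) : EReal)

/-- The double Fenchel–Legendre transform `ℑ⋆⋆` of `ℑ`. -/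
def entIbis (P₀ : Measure (Config d)) (μ : ProbabilityMeasure (EnvSp d)) : EReal :=
  ⨆ f : BoundedContinuousFunction (EnvSp d) ℝ,
    ((pairing f μ : ℝ) : EReal) - entIstar P₀ f

/-- The contraction map `ξ(μ) = ∫ Σ_e e dμ(ω,e)`. -/
def xi (μ : ProbabilityMeasure (EnvSp d)) : Fin d → ℝ :=
  fun i => ∫ q, ((q.2.1 i : ℤ) : ℝ) ∂μ.toMeasure

/-- The mean velocity `X_n / n` of a trajectory. -/
def meanVel {n : ℕ} (s : Fin n → Step d) : Fin d → ℝ :=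
  fun i => (n : ℝ)⁻¹ * ((pos s n) i : ℝ)

/-- The class `Π̃` of environment transition kernels. -/
def PiT (d : ℕ) (P₀ : Measure (Config d)) : Set (Config d → Step d → ℝ) :=
  {κ | (∀ e : Step d, Measurable (fun ω => κ ω e)) ∧
    (∀ ω e, 0 ≤ κ ω e) ∧ (∀ e : Step d, ∀ᵐ ω ∂P₀, κ ω e ≤ 1) ∧
    (∀ᵐ ω ∂P₀, ∑ e : Step d, κ ω e = 1) ∧
    (∀ e : Step d, ∀ᵐ ω ∂P₀, (κ ω e = 0 ↔ trans ω 0 e.1 = 0))}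

/-- `φ dP₀` is an invariant probability density for the kernel `κ`. -/
def IsInvDensity (P₀ : Measure (Config d)) (κ : Config d → Step d → ℝ)
    (φ : Config d → ℝ) : Prop :=
  Measurable φ ∧ (∀ ω, 0 ≤ φ ω) ∧ (∫ ω, φ ω ∂P₀) = 1 ∧
    (∀ᵐ ω ∂P₀, φ ω = ∑ e : Step d, κ (shift (-e.1) ω) e * φ (shift (-e.1) ω))

/-- The set `ℰ` of pairs `(π̃, φ)`. -/
def Epairs (d : ℕ) (P₀ : Measure (Config d)) :
    Set ((Config d → Step d → ℝ) × (Config d → ℝ)) :=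
  {q | q.1 ∈ PiT d P₀ ∧ IsInvDensity P₀ q.1 q.2}

/-- The measure `dμ(ω,e) = π̃(ω,e) φ(ω) dP₀(ω)` associated with a pair `(π̃, φ)`. -/
def pairMeasure (P₀ : Measure (Config d)) (κ : Config d → Step d → ℝ)
    (φ : Config d → ℝ) : Measure (EnvSp d) :=
  Measure.sum (fun e : Step d =>
    (P₀.withDensity (fun ω => ENNReal.ofReal (κ ω e * φ ω))).map (fun ω => (ω, e)))

/-- The kernel `dμ/d(μ)_1` associated with a measure on `Ω_0 × 𝕌_d`. -/
def toKappa (μ : Measure (EnvSp d)) : Config d → Step d → ℝ :=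
  fun ω e => ((slice μ e).rnDeriv (marg1 μ) ω).toReal

/-- The density `d(μ)_1/dP₀` associated with a measure on `Ω_0 × 𝕌_d`. -/
def toPhi (P₀ : Measure (Config d)) (μ : Measure (EnvSp d)) : Config d → ℝ :=
  fun ω => ((marg1 μ).rnDeriv P₀ ω).toReal

/-- The environment Markov transition operator `R_κ`. -/
def kernelStep (κ : Config d → Step d → ℝ) (f : Config d → ℝ) : Config d → ℝ :=
  fun ω => ∑ e : Step d, κ ω e * f (shift e.1 ω)

/-- `Q` is an invariant measure for the environment kernel `R_κ`. -/
def IsInvariant (κ : Config d → Step d → ℝ) (Q : Measure (Config d)) : Prop :=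
  ∀ f : Config d → ℝ, Measurable f → (∃ C, ∀ ω, |f ω| ≤ C) →
    ∫ ω, kernelStep κ f ω ∂Q = ∫ ω, f ω ∂Q

/-- Partial sum `Σ_{k<m} f(τ_{X_k}ω, X_{k+1}-X_k)` along a trajectory of length `N`. -/
def partialSumF (f : EnvSp d → ℝ) (ω : Config d) {N : ℕ} (s : Fin N → Step d) (m : ℕ) : ℝ :=
  ∑ k ∈ Finset.univ.filter (fun k : Fin N => (k : ℕ) < m), f (envPair ω s k)

/-- The sum of `G` along the path `γ` up to time `n`. -/
def pathSum (G : Config d → V d → ℝ) (ω : Config d) (γ : ℕ → V d) (n : ℕ) : ℝ :=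
  ∑ k ∈ Finset.range n, G (shift (γ k) ω) (γ (k + 1) - γ k)

/-- The class `𝒢_∞` of gradients: zero mean, uniformly bounded, closed loops. -/
def Ginfty (d : ℕ) (P₀ : Measure (Config d)) : Set (Config d → V d → ℝ) :=
  {G | (∀ e ∈ Ud d, Measurable (fun ω => G ω e)) ∧
    (∀ e ∈ Ud d, ∫ ω, G ω e ∂P₀ = 0) ∧
    (∃ M : ℝ, ∀ e ∈ Ud d, ∀ᵐ ω ∂P₀, |G ω e| ≤ M) ∧
    (∀ᵐ ω ∂P₀, ∀ (γ : ℕ → V d) (n : ℕ),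
      memCluster ω (γ 0) → IsOpenPath ω γ n → γ n = γ 0 → pathSum G ω γ n = 0)}

open Classical in
/-- The corrector `Ψ(ω,x)`: the sum of `G` along some open path from `0` to `x`. -/
def corr (G : Config d → V d → ℝ) (ω : Config d) (x : V d) : ℝ :=
  if h : ∃ q : (ℕ → V d) × ℕ, q.1 0 = 0 ∧ q.1 q.2 = x ∧ IsOpenPath ω q.1 q.2
  then pathSum G ω h.choose.1 h.choose.2 else 0

/-- The chemical distance: minimal length of an open path joining `x` and `y`. -/
def chemDist (ω : Config d) (x y : V d) : ℕ :=
  sInf {n : ℕ | ∃ γ : ℕ → V d, γ 0 = x ∧ γ n = y ∧ IsOpenPath ω γ n}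

open Classical in
/-- The functional `Λ(f,G)`. -/
def Lam (P₀ : Measure (Config d)) (f : EnvSp d → ℝ) (G : Config d → V d → ℝ) : EReal :=
  essSup (fun ω => ((Real.log (∑ e : Step d,
    if edgeOpen ω 0 e.1 then trans ω 0 e.1 * Real.exp (f (ω, e) + G ω e.1) else 0)) : EReal)) P₀

/-- The variational formula `H̄(f) = sup_{μ ∈ ℳ_1⋆} {⟨f,μ⟩ - ℑ(μ)}`. -/
def Hbar (P₀ : Measure (Config d)) (f : EnvSp d → ℝ) : EReal :=
  ⨆ μ ∈ M1star d P₀, ((pairing f μ : ℝ) : EReal) - ((entI P₀ μ : ℝ≥0∞) : EReal)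

/-- The finite σ-algebra `𝓑_k` recording all bonds in the box of size `k` around the origin. -/
def Bsig (d k : ℕ) : MeasurableSpace (Config d) :=
  MeasurableSpace.comap
    (fun (ω : Config d) (b : {b : EdgeIx d // ∀ i, |b.1 i| ≤ (k : ℤ)}) => ω b.1) inferInstance

end SRWPC
namespace SRWPC

/-- single-bond law -/
def bernM (p : ℝ) : Measure Bool :=
  ENNReal.ofReal p • Measure.dirac true + ENNReal.ofReal (1 - p) • Measure.dirac false

lemma bernM_prob {p : ℝ} (h0 : 0 < p) (h1 : p < 1) : IsProbabilityMeasure (bernM p) := by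
  constructor
  simp only [bernM, Measure.add_apply, Measure.smul_apply, measure_univ, smul_eq_mul, mul_one]
  rw [← ENNReal.ofReal_add h0.le (by linarith)]
  simp

lemma bernM_singleton (p : ℝ) (a : Bool) :
    bernM p {a} = ENNReal.ofReal (if a then p else 1 - p) := by
  cases a <;> simp [bernM]

lemma eq_infinitePi_of_bernoulli {p : ℝ} (h0 : 0 < p) (h1 : p < 1) {P : Measure (Config d)}
    (hP : IsBernoulli d p P) :
    haveI := bernM_prob h0 h1
    P = Measure.infinitePi (fun _ : EdgeIx d => bernM p) := by
  haveI := bernM_prob h0 h1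
  haveI := hP.1
  refine IsProjectiveLimit.unique (P := fun s : Finset (EdgeIx d) =>
    Measure.pi (fun _ : s => bernM p)) ?_ (Measure.isProjectiveLimit_infinitePi _)
  intro s
  refine Measure.ext_of_singleton fun a => ?_
  rw [Measure.map_apply (by fun_prop) (measurableSet_singleton a), Measure.pi_singleton]
  have h := hP.2 s (fun b => if h : b ∈ s then a ⟨b, h⟩ else true)
  have e : (s.restrict ⁻¹' {a} : Set (Config d)) =
      {ω | ∀ b ∈ s, ω b = (fun b => if h : b ∈ s then a ⟨b, h⟩ else true) b} := by
    ext ω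
    simp only [Set.mem_preimage, Set.mem_singleton_iff, Set.mem_setOf_eq, funext_iff,
      Finset.restrict]
    constructor
    · intro h b hb
      simpa [hb] using h ⟨b, hb⟩
    · rintro h ⟨b, hb⟩
      simpa [hb] using h b hb
  rw [e, h, ← Finset.prod_coe_sort]
  refine Finset.prod_congr rfl fun i _ => ?_
  rw [bernM_singleton]
  simp

lemma map_block {p : ℝ} (h0 : 0 < p) (h1 : p < 1) {P : Measure (Config d)}
    (hP : IsBernoulli d p P) {α : Type*} {f : α → EdgeIx d} (hf : Function.Injective f) :
    haveI := bernM_prob h0 h1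
    P.map (fun ω a => ω (f a)) = Measure.infinitePi (fun _ : α => bernM p) := by
  haveI := bernM_prob h0 h1
  rw [eq_infinitePi_of_bernoulli h0 h1 hP]
  exact Measure.map_infinitePi_infinitePi_of_inj (P := fun _ : EdgeIx d => bernM p) hf

lemma measurable_shift (x : V d) : Measurable (shift x : Config d → Config d) := by
  unfold shift; fun_prop

lemma map_shift {p : ℝ} (h0 : 0 < p) (h1 : p < 1) {P : Measure (Config d)}
    (hP : IsBernoulli d p P) (x : V d) : P.map (shift x) = P := by
  haveI := bernM_prob h0 h1
  have := map_block h0 h1 hP (f := fun b : EdgeIx d => (b.1 + x, b.2)) (by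
    rintro ⟨a, i⟩ ⟨b, j⟩ h
    simpa using h)
  rw [← eq_infinitePi_of_bernoulli h0 h1 hP] at this
  exact this

lemma indep_blocks {p : ℝ} (h0 : 0 < p) (h1 : p < 1) {P : Measure (Config d)}
    (hP : IsBernoulli d p P) {α β : Type*} {f : α → β → EdgeIx d}
    (hf : Function.Injective (fun q : α × β => f q.1 q.2)) :
    iIndepFun (fun (a : α) (ω : Config d) (b : β) => ω (f a b)) P := by
  haveI := bernM_prob h0 h1
  haveI := hP.1
  rw [iIndepFun_iff_map_fun_eq_infinitePi_map (by fun_prop)]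
  have e : ∀ a : α, P.map (fun (ω : Config d) (b : β) => ω (f a b)) =
      Measure.infinitePi (fun _ : β => bernM p) := fun a =>
    map_block h0 h1 hP (f := f a) (fun b b' h => by
      have := @hf (a, b) (a, b') h
      simpa using this)
  simp_rw [e]
  rw [← Measure.infinitePi_map_curry (fun (_ : α) (_ : β) => bernM p),
    ← map_block h0 h1 hP hf, Measure.map_map (by fun_prop) (by fun_prop)]
  rfl

end SRWPC
namespace SRWPC

/-- `y` is reachable from `x` in exactly `n` open steps. -/
def stepReach (ω : Config d) : ℕ → V d → V d → Prop
  | 0, x, y => x = y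
  | n + 1, x, y => ∃ z, stepReach ω n x z ∧ (y - z) ∈ Ud d ∧ edgeOpen ω z (y - z)

lemma stepReach_iff (ω : Config d) (n : ℕ) (x y : V d) :
    stepReach ω n x y ↔ ∃ γ : ℕ → V d, γ 0 = x ∧ γ n = y ∧ IsOpenPath ω γ n := by
  induction n generalizing y with
  | zero =>
    constructor
    · intro h
      exact ⟨fun _ => x, rfl, h, fun k hk => absurd hk (Nat.not_lt_zero k)⟩
    · rintro ⟨γ, h0, h1, -⟩
      exact h0.symm.trans h1
  | succ n ih =>
    constructor
    · rintro ⟨z, hz, h1, h2⟩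
      obtain ⟨γ, g0, gn, hγ⟩ := (ih z).1 hz
      refine ⟨fun k => if k ≤ n then γ k else y, by simpa using g0, by simp, ?_⟩
      intro k hk
      rcases Nat.lt_succ_iff_lt_or_eq.1 hk with hk | rfl
      · have a : k + 1 ≤ n := hk
        have b : k ≤ n := hk.le
        simp only [a, b, if_true]
        exact hγ k hk
      · simp only [le_refl, if_true, Nat.not_succ_le_self, if_false, gn]
        exact ⟨h1, h2⟩
    · rintro ⟨γ, g0, gn, hγ⟩
      refine ⟨γ n, (ih _).2 ⟨γ, g0, rfl, fun k hk => hγ k (hk.trans n.lt_succ_self)⟩, ?_⟩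
      rw [← gn]
      exact hγ n n.lt_succ_self

lemma memCluster_iff (ω : Config d) (x : V d) :
    memCluster ω x ↔ ∀ R : ℕ, ∃ y : V d, ∃ n : ℕ, ¬ inBox y R ∧ stepReach ω n x y := by
  unfold memCluster
  refine forall_congr' fun R => ?_
  constructor
  · rintro ⟨γ, n, h0, h1, h2⟩
    exact ⟨γ n, n, h2, (stepReach_iff ω n x _).2 ⟨γ, h0, rfl, h1⟩⟩
  · rintro ⟨y, n, h2, h⟩
    obtain ⟨γ, h0, h1, h3⟩ := (stepReach_iff ω n x y).1 h
    exact ⟨γ, n, h0, h3, h1 ▸ h2⟩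

lemma measurableSet_edgeOpen (x e : V d) : MeasurableSet {ω : Config d | edgeOpen ω x e} := by
  unfold edgeOpen
  simp only [measurableSet_setOf]
  refine Measurable.exists fun i => ?_
  refine Measurable.or ?_ ?_
  · refine Measurable.and measurable_const ?_
    exact measurableSet_setOf.1
      (measurableSet_eq_fun (measurable_pi_apply (x, i)) measurable_const)
  · refine Measurable.and measurable_const ?_
    exact measurableSet_setOf.1
      (measurableSet_eq_fun (measurable_pi_apply (x - unitVec d i, i)) measurable_const)

lemma measurable_stepReach (n : ℕ) (x y : V d) :
    Measurable (fun ω : Config d => stepReach ω n x y) := by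
  induction n generalizing y with
  | zero => exact measurable_const
  | succ n ih =>
    refine Measurable.exists fun z => ?_
    exact (ih z).and (measurable_const.and (measurableSet_setOf.1 (measurableSet_edgeOpen _ _)))

lemma measurableSet_cluZero : MeasurableSet (cluZero d) := by
  unfold cluZero
  simp only [memCluster_iff, measurableSet_setOf]
  refine Measurable.forall fun R => Measurable.exists fun y => Measurable.exists fun n => ?_
  exact measurable_const.and (measurable_stepReach n 0 y)

lemma edgeOpen_shift (ω : Config d) (v x e : V d) :
    edgeOpen (shift v ω) x e ↔ edgeOpen ω (x + v) e := by
  unfold edgeOpen shift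
  refine exists_congr fun i => ?_
  have : x + v - unitVec d i = x - unitVec d i + v := by abel
  rw [this]

lemma stepReach_shift (ω : Config d) (v : V d) (n : ℕ) (x y : V d) :
    stepReach (shift v ω) n x y ↔ stepReach ω n (x + v) (y + v) := by
  induction n generalizing y with
  | zero => simp [stepReach]
  | succ n ih =>
    constructor
    · rintro ⟨z, hz, h1, h2⟩
      refine ⟨z + v, (ih z).1 hz, by simpa using h1, ?_⟩
      rw [edgeOpen_shift] at h2
      simpa using h2
    · rintro ⟨z, hz, h1, h2⟩
      refine ⟨z - v, (ih _).2 (by simpa using hz), ?_, ?_⟩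
      · have : y - (z - v) = y + v - z := by abel
        rwa [this]
      · have : y - (z - v) = y + v - z := by abel
        rw [edgeOpen_shift, this]
        simpa using h2

lemma memCluster_shift_mp {ω : Config d} {v x : V d} (h : memCluster (shift v ω) x) :
    memCluster ω (x + v) := by
  rw [memCluster_iff] at h ⊢
  intro R
  obtain ⟨M, hM⟩ : ∃ M : ℕ, ∀ i, |(v i : ℝ)| ≤ M := by
    obtain ⟨M, hM⟩ := exists_nat_ge (∑ i, |(v i : ℝ)|)
    exact ⟨M, fun i => (Finset.single_le_sum (f := fun i => |(v i : ℝ)|)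
      (fun j _ => abs_nonneg _) (Finset.mem_univ i)).trans hM⟩
  obtain ⟨y, n, hy, hr⟩ := h (R + M)
  refine ⟨y + v, n, fun hb => hy fun i => ?_, (stepReach_shift ω v n x y).1 hr⟩
  have h1 := hb i
  have h2 := hM i
  simp only [Pi.add_apply, Int.cast_add] at h1
  rw [abs_le] at *
  push_cast
  constructor <;> linarith

lemma shift_shift (ω : Config d) (v w : V d) : shift v (shift w ω) = shift (v + w) ω := by
  funext b
  simp [shift, add_assoc]

lemma shift_zero (ω : Config d) : shift 0 ω = ω := by
  funext b
  simp [shift]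

lemma shift_mem_cluZero (ω : Config d) (y : V d) : shift y ω ∈ cluZero d ↔ memCluster ω y := by
  constructor
  · intro h
    simpa using memCluster_shift_mp (x := 0) h
  · intro h
    have := memCluster_shift_mp (ω := shift y ω) (v := -y) (x := y)
      (by rwa [shift_shift, neg_add_cancel, shift_zero])
    simpa [cluZero] using this

/-- The box of radius `r` around `x`. -/
def bx (x : V d) (r : ℕ) : Finset (V d) :=
  Fintype.piFinset fun i => Finset.Icc (x i - r) (x i + r)

lemma mem_bx {x y : V d} {r : ℕ} : y ∈ bx x r ↔ ∀ i, |y i - x i| ≤ r := by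
  simp only [bx, Fintype.mem_piFinset, Finset.mem_Icc, abs_le]
  refine forall_congr' fun i => ?_
  constructor <;> rintro ⟨h1, h2⟩ <;> constructor <;> linarith

lemma card_bx (x : V d) (r : ℕ) : (bx x r).card = (2 * r + 1) ^ d := by
  have : ∀ i, (x i + (r : ℤ) + 1 - (x i - r)).toNat = 2 * r + 1 := fun i => by omega
  simp [bx, Fintype.card_piFinset, Int.card_Icc, this]

lemma coe_bx (x : V d) (r : ℕ) : (bx x r : Set (V d)) = Metric.closedBall x (r : ℝ) := by
  ext y
  rw [Finset.mem_coe, mem_bx, Metric.mem_closedBall, dist_pi_le_iff (by positivity)]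
  refine forall_congr' fun i => ?_
  rw [Int.dist_eq]
  exact_mod_cast Iff.rfl

open Classical in
/-- Discrete maximal inequality. -/
lemma discrete_maximal (A : Set (V d)) (N : ℕ) (lam : ℝ) (hl : 0 < lam) :
    lam * ((bx (0 : V d) N).filter (fun x => ∃ n ≤ N,
      lam * (2 * n + 1 : ℝ) ^ d < (((bx x n).filter (· ∈ A)).card : ℝ))).card ≤
    5 ^ d * (((bx (0 : V d) (2 * N)).filter (· ∈ A)).card : ℝ) := by
  set X := (bx (0 : V d) N).filter (fun x => ∃ n ≤ N,
      lam * (2 * n + 1 : ℝ) ^ d < (((bx x n).filter (· ∈ A)).card : ℝ)) with hX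
  have hx : ∀ x : V d, ∃ n : ℕ, x ∈ X → n ≤ N ∧
      lam * (2 * n + 1 : ℝ) ^ d < (((bx x n).filter (· ∈ A)).card : ℝ) := by
    intro x
    by_cases h : x ∈ X
    · obtain ⟨n, h1, h2⟩ := (Finset.mem_filter.1 h).2
      exact ⟨n, fun _ => ⟨h1, h2⟩⟩
    · exact ⟨0, fun h' => absurd h' h⟩
  choose r hr using hx
  obtain ⟨u, huX, hdis, hcov⟩ := Vitali.exists_disjoint_subfamily_covering_enlargement_closedBall
    (X : Set (V d)) (fun x => x) (fun x => (r x : ℝ)) (N : ℝ)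
    (fun x hx => by exact_mod_cast (hr x hx).1) 5 (by norm_num)
  have hfin : u.Finite := X.finite_toSet.subset huX
  lift u to Finset (V d) using hfin
  have huX' : ∀ x ∈ u, x ∈ X := fun x hx => huX hx
  have hsub : X ⊆ u.biUnion fun x => bx x (5 * r x) := by
    intro x hx
    obtain ⟨b, hb, hs⟩ := hcov x hx
    refine Finset.mem_biUnion.2 ⟨b, hb, ?_⟩
    rw [← Finset.mem_coe, coe_bx]
    have := hs (Metric.mem_closedBall_self (by positivity))
    simpa using this
  have hc1 : (X.card : ℝ) ≤ ∑ x ∈ u, (5 : ℝ) ^ d * (2 * r x + 1 : ℝ) ^ d := by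
    have : X.card ≤ ∑ x ∈ u, (bx x (5 * r x)).card :=
      (Finset.card_le_card hsub).trans Finset.card_biUnion_le
    calc (X.card : ℝ) ≤ ((∑ x ∈ u, (bx x (5 * r x)).card : ℕ) : ℝ) := by exact_mod_cast this
      _ ≤ _ := by
        push_cast
        refine Finset.sum_le_sum fun x _ => ?_
        rw [card_bx, ← mul_pow]
        push_cast
        exact pow_le_pow_left₀ (by positivity) (by linarith) d
  have hc2 : ∑ x ∈ u, (((bx x (r x)).filter (· ∈ A)).card) ≤
      ((bx (0 : V d) (2 * N)).filter (· ∈ A)).card := by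
    rw [← Finset.card_biUnion]
    · refine Finset.card_le_card fun y hy => ?_
      obtain ⟨x, hxu, hy⟩ := Finset.mem_biUnion.1 hy
      obtain ⟨hy1, hy2⟩ := Finset.mem_filter.1 hy
      refine Finset.mem_filter.2 ⟨mem_bx.2 fun i => ?_, hy2⟩
      have h1 := mem_bx.1 hy1 i
      have h2 := mem_bx.1 (Finset.mem_filter.1 (huX' x hxu)).1 i
      have h3 := (hr x (huX' x hxu)).1
      simp only [Pi.zero_apply, sub_zero] at h2 ⊢
      rw [abs_le] at *
      push_cast
      constructor <;> omega
    · intro x hx y hy hxy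
      have := hdis hx hy hxy
      simp only [Function.onFun, ← coe_bx, Finset.disjoint_coe] at this
      exact Finset.disjoint_filter_filter this
  calc lam * (X.card : ℝ) ≤ lam * ∑ x ∈ u, (5 : ℝ) ^ d * (2 * r x + 1 : ℝ) ^ d := by gcongr
    _ = 5 ^ d * ∑ x ∈ u, lam * (2 * r x + 1 : ℝ) ^ d := by
      rw [Finset.mul_sum, Finset.mul_sum]
      exact Finset.sum_congr rfl fun x _ => by ring
    _ ≤ 5 ^ d * ∑ x ∈ u, (((bx x (r x)).filter (· ∈ A)).card : ℝ) := by
      gcongr with x hx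
      exact (hr x (huX' x hx)).2.le
    _ ≤ _ := by
      gcongr
      exact_mod_cast hc2

end SRWPC
namespace SRWPC

open Classical in
/-- number of `y ∈ S` such that `τ_y ω ∈ F`. -/
def cnt (F : Set (Config d)) (S : Finset (V d)) (ω : Config d) : ℝ :=
  ((S.filter (fun y => shift y ω ∈ F)).card : ℝ)

lemma cnt_eq_sum (F : Set (Config d)) (S : Finset (V d)) (ω : Config d) :
    cnt F S ω = ∑ y ∈ S, F.indicator (fun _ => (1 : ℝ)) (shift y ω) := by
  classical
  rw [cnt, Finset.natCast_card_filter]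
  refine Finset.sum_congr rfl fun y _ => ?_
  simp [Set.indicator_apply]

lemma measurable_ind {F : Set (Config d)} (hF : MeasurableSet F) (y : V d) :
    Measurable (fun ω => F.indicator (fun _ => (1 : ℝ)) (shift y ω)) :=
  (measurable_const.indicator hF).comp (measurable_shift y)

lemma measurable_cnt {F : Set (Config d)} (hF : MeasurableSet F) (S : Finset (V d)) :
    Measurable (cnt F S) := by
  have : cnt F S = fun ω => ∑ y ∈ S, F.indicator (fun _ => (1 : ℝ)) (shift y ω) :=
    funext (cnt_eq_sum F S)
  rw [this]
  exact Finset.measurable_fun_sum _ fun y _ => measurable_ind hF y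

lemma integrable_ind {P : Measure (Config d)} [IsProbabilityMeasure P] {F : Set (Config d)}
    (hF : MeasurableSet F) (y : V d) :
    Integrable (fun ω => F.indicator (fun _ => (1 : ℝ)) (shift y ω)) P := by
  refine Integrable.of_bound (measurable_ind hF y).aestronglyMeasurable 1 (ae_of_all _ fun ω => ?_)
  by_cases h : shift y ω ∈ F <;> simp [Set.indicator, h]

lemma integral_ind {P : Measure (Config d)} [IsProbabilityMeasure P]
    (hs : ∀ x : V d, P.map (shift x) = P) {F : Set (Config d)}
    (hF : MeasurableSet F) (y : V d) :
    ∫ ω, F.indicator (fun _ => (1 : ℝ)) (shift y ω) ∂P = P.real F := by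
  have := integral_map (μ := P) (measurable_shift y).aemeasurable
    (f := F.indicator (fun _ => (1 : ℝ)))
    (measurable_const.indicator hF).aestronglyMeasurable
  rw [← this, hs, integral_indicator_const _ hF]
  simp

lemma integrable_cnt {P : Measure (Config d)} [IsProbabilityMeasure P] {F : Set (Config d)}
    (hF : MeasurableSet F) (S : Finset (V d)) : Integrable (cnt F S) P := by
  have : cnt F S = fun ω => ∑ y ∈ S, F.indicator (fun _ => (1 : ℝ)) (shift y ω) :=
    funext (cnt_eq_sum F S)
  rw [this]
  exact integrable_finsetSum _ fun y _ => integrable_ind hF y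

lemma integral_cnt {P : Measure (Config d)} [IsProbabilityMeasure P]
    (hs : ∀ x : V d, P.map (shift x) = P) {F : Set (Config d)}
    (hF : MeasurableSet F) (S : Finset (V d)) :
    ∫ ω, cnt F S ω ∂P = S.card * P.real F := by
  simp_rw [cnt_eq_sum]
  rw [integral_finsetSum _ fun y _ => integrable_ind hF y]
  simp [integral_ind hs hF]

lemma cnt_shift (F : Set (Config d)) (x : V d) (n : ℕ) (ω : Config d) :
    cnt F (bx 0 n) (shift x ω) = cnt F (bx x n) ω := by
  classical
  unfold cnt
  congr 1
  refine Finset.card_bij (fun y _ => y + x) ?_ ?_ ?_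
  · intro y hy
    rw [Finset.mem_filter, mem_bx, shift_shift] at *
    exact ⟨fun i => by simpa using hy.1 i, hy.2⟩
  · intro y _ z _ h
    simpa using h
  · intro y hy
    refine ⟨y - x, ?_, by simp⟩
    rw [Finset.mem_filter, mem_bx] at *
    rw [shift_shift]
    exact ⟨fun i => by simpa using hy.1 i, by simpa using hy.2⟩

lemma maximal_N {P : Measure (Config d)} [IsProbabilityMeasure P]
    (hs : ∀ x : V d, P.map (shift x) = P) {F : Set (Config d)}
    (hF : MeasurableSet F) {lam : ℝ} (hl : 0 < lam) (N : ℕ) :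
    P.real {ω | ∃ n ≤ N, lam * (2 * n + 1 : ℝ) ^ d < cnt F (bx 0 n) ω} ≤
      10 ^ d * P.real F / lam := by
  classical
  set E := {ω : Config d | ∃ n ≤ N, lam * (2 * n + 1 : ℝ) ^ d < cnt F (bx 0 n) ω} with hE
  have mE : MeasurableSet E := by
    have : E = ⋃ n ∈ {n : ℕ | n ≤ N}, {ω | lam * (2 * n + 1 : ℝ) ^ d < cnt F (bx 0 n) ω} := by
      ext ω; simp [hE]
    rw [this]
    exact MeasurableSet.biUnion (Set.to_countable _) fun n _ =>
      measurableSet_lt measurable_const (measurable_cnt hF _)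
  have key : ∀ ω, lam * cnt E (bx 0 N) ω ≤ 5 ^ d * cnt F (bx 0 (2 * N)) ω := by
    intro ω
    have h := discrete_maximal {y : V d | shift y ω ∈ F} N lam hl
    have e : cnt E (bx 0 N) ω = (((bx (0 : V d) N).filter (fun x => ∃ n ≤ N,
      lam * (2 * n + 1 : ℝ) ^ d <
        (((bx x n).filter (· ∈ {y : V d | shift y ω ∈ F})).card : ℝ))).card : ℝ) := by
      have e' : ∀ x, shift x ω ∈ E ↔ ∃ n ≤ N, lam * (2 * n + 1 : ℝ) ^ d <
          (((bx x n).filter (· ∈ {y : V d | shift y ω ∈ F})).card : ℝ) := ?_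
      · rw [cnt]
        congr 2
        ext x
        simp only [Finset.mem_filter, e']
      intro x
      change (∃ n ≤ N, lam * (2 * n + 1 : ℝ) ^ d < cnt F (bx 0 n) (shift x ω)) ↔ _
      simp_rw [cnt_shift]
      unfold cnt
      simp only [Set.mem_setOf_eq]
    rw [e]
    refine h.trans (le_of_eq ?_)
    unfold cnt
    simp only [Set.mem_setOf_eq]
  have h1 := integral_mono (μ := P) ((integrable_cnt mE (bx 0 N)).const_mul lam)
    ((integrable_cnt hF (bx 0 (2 * N))).const_mul (5 ^ d)) key
  rw [integral_const_mul, integral_const_mul, integral_cnt hs mE, integral_cnt hs hF, card_bx,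
    card_bx] at h1
  push_cast at h1
  rw [le_div_iff₀ hl]
  have hpos : (0 : ℝ) < (2 * N + 1 : ℝ) ^ d := by positivity
  refine le_of_mul_le_mul_left ?_ hpos
  calc (2 * N + 1 : ℝ) ^ d * (P.real E * lam) = lam * ((2 * N + 1 : ℝ) ^ d * P.real E) := by ring
    _ ≤ _ := h1
    _ ≤ 5 ^ d * ((2 * (2 * N + 1 : ℝ)) ^ d * P.real F) := by
      gcongr
      linarith
    _ = (2 * N + 1 : ℝ) ^ d * (10 ^ d * P.real F) := by
      rw [mul_pow, show (10 : ℝ) = 5 * 2 by norm_num, mul_pow]; ring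

lemma maximal {P : Measure (Config d)} [IsProbabilityMeasure P]
    (hs : ∀ x : V d, P.map (shift x) = P) {F : Set (Config d)}
    (hF : MeasurableSet F) {lam : ℝ} (hl : 0 < lam) :
    P {ω | ∃ n : ℕ, lam * (2 * n + 1 : ℝ) ^ d < cnt F (bx 0 n) ω} ≤
      ENNReal.ofReal (10 ^ d * P.real F / lam) := by
  have e : {ω : Config d | ∃ n : ℕ, lam * (2 * n + 1 : ℝ) ^ d < cnt F (bx 0 n) ω} =
      ⋃ N : ℕ, {ω | ∃ n ≤ N, lam * (2 * n + 1 : ℝ) ^ d < cnt F (bx 0 n) ω} := by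
    ext ω
    simp only [Set.mem_setOf_eq, Set.mem_iUnion]
    constructor
    · rintro ⟨n, h⟩
      exact ⟨n, n, le_rfl, h⟩
    · rintro ⟨_, n, _, h⟩
      exact ⟨n, h⟩
  rw [e, Monotone.measure_iUnion]
  · refine iSup_le fun N => ?_
    rw [← ofReal_measureReal]
    exact ENNReal.ofReal_le_ofReal (maximal_N hs hF hl N)
  · rintro N M h ω ⟨n, hn, hh⟩
    exact ⟨n, hn.trans h, hh⟩

/-- Concentration for local events. -/
lemma conc {p : ℝ} (h0 : 0 < p) (h1 : p < 1) {P : Measure (Config d)}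
    (hP : IsBernoulli d p P) {G : Set (Config d)}
    (hG : G ∈ measurableCylinders (fun _ : EdgeIx d => Bool)) {ε : ℝ} (hε : 0 < ε) :
    ∃ K c : ℝ, 0 < c ∧ 0 ≤ K ∧ ∀ S : Finset (V d),
      P.real {ω | cnt G S ω < (P.real G - ε) * S.card} ≤ K * Real.exp (-c * S.card) := by
  classical
  have := hP.1
  have hs := map_shift h0 h1 hP
  have mG : MeasurableSet G := by
    rw [← generateFrom_measurableCylinders]
    exact MeasurableSpace.measurableSet_generateFrom hG
  obtain ⟨s, T, mT, rfl⟩ := (mem_measurableCylinders _).1 hG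
  obtain ⟨M, hM⟩ : ∃ M : ℕ, ∀ b ∈ s, ∀ i, |b.1 i| ≤ (M : ℤ) := by
    refine ⟨∑ b ∈ s, ∑ i, (b.1 i).natAbs, fun b hb i => ?_⟩
    have h1 := Finset.single_le_sum (f := fun i => (b.1 i).natAbs) (fun _ _ => Nat.zero_le _)
      (Finset.mem_univ i)
    have h2 := Finset.single_le_sum (f := fun b : EdgeIx d => ∑ i, (b.1 i).natAbs)
      (fun _ _ => Nat.zero_le _) hb
    have h3 := h1.trans h2
    rw [Int.abs_eq_natAbs]
    exact_mod_cast h3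
  set m : ℕ := 2 * M + 1 with hm
  have : NeZero m := ⟨by omega⟩
  set G : Set (Config d) := cylinder (α := fun _ => Bool) s T with hGdef
  let res : V d → (Fin d → ZMod m) := fun y i => (y i : ZMod m)
  let X : V d → Config d → ℝ := fun y ω => P.real G - G.indicator (fun _ => (1 : ℝ)) (shift y ω)
  have hind : ∀ c : Fin d → ZMod m,
      iIndepFun (fun (y : {y : V d // res y = c}) ω => X y.1 ω) P := by
    intro c
    have h := indep_blocks h0 h1 hP (α := {y : V d // res y = c}) (β := s)
      (f := fun y b => (b.1.1 + y.1, b.1.2)) (by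
        rintro ⟨⟨y, hy⟩, ⟨⟨b, i⟩, hb⟩⟩ ⟨⟨y', hy'⟩, ⟨⟨b', i'⟩, hb'⟩⟩ h
        simp only [Prod.mk.injEq] at h
        obtain ⟨h2, rfl⟩ := h
        have : b = b' := by
          funext j
          have e1 := congrFun h2 j
          simp only [Pi.add_apply] at e1
          have e2 : ((y j : ℤ) : ZMod m) = ((y' j : ℤ) : ZMod m) :=
            congrFun (hy.trans hy'.symm) j
          rw [ZMod.intCast_eq_intCast_iff_dvd_sub] at e2
          have e3 := hM _ hb j
          have e4 := hM _ hb' j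
          simp only at e3 e4
          have e5 : y' j - y j = b j - b' j := by linarith
          rw [e5] at e2
          have e6 := Int.eq_zero_of_abs_lt_dvd e2 (by
            rw [abs_le] at *
            rw [abs_lt]
            push_cast [hm]
            constructor <;> linarith)
          linarith
        subst this
        have : y = y' := by simpa using h2
        subst this
        rfl)
    exact h.comp (fun _ v => P.real G - T.indicator (fun _ => (1 : ℝ)) v)
      (fun _ => measurable_const.sub (measurable_const.indicator mT))
  have hsub : ∀ y : V d, HasSubgaussianMGF (X y) ((1 / 2) ^ 2) P := by
    intro y
    have := hasSubgaussianMGF_of_mem_Icc_of_integral_eq_zero (μ := P) (X := X y)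
      (a := P.real G - 1) (b := P.real G)
      (measurable_const.sub (measurable_ind mG y)).aemeasurable
      (ae_of_all _ fun ω => by
        by_cases h : shift y ω ∈ G <;> simp [X, Set.indicator, h])
      (by
        simp only [X]
        rw [integral_sub (integrable_const _) (integrable_ind mG y), integral_ind hs mG]
        simp)
    simpa using this
  set κ : ℝ := ((Fintype.card (Fin d → ZMod m) : ℕ) : ℝ) with hκ
  have hκpos : 0 < κ := by
    rw [hκ]; exact_mod_cast Fintype.card_pos
  refine ⟨κ, 2 * ε ^ 2 / κ ^ 2, by positivity, hκpos.le, fun S => ?_⟩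
  rcases S.eq_empty_or_nonempty with rfl | hS
  · simp [cnt, hκpos.le]
  have hSpos : (0 : ℝ) < S.card := by exact_mod_cast hS.card_pos
  have hcov : {ω | cnt G S ω < (P.real G - ε) * S.card} ⊆
      ⋃ c : Fin d → ZMod m, {ω | ε * S.card / κ ≤ ∑ y ∈ S with res y = c, X y ω} := by
    intro ω hω
    by_contra hcon
    simp only [Set.mem_iUnion, Set.mem_setOf_eq, not_exists, not_le] at hcon hω
    have h2 : ∑ y ∈ S, X y ω ≤ ε * S.card := by
      rw [← Finset.sum_fiberwise S res]
      calc _ ≤ ∑ c : Fin d → ZMod m, ε * S.card / κ := Finset.sum_le_sum fun c _ => (hcon c).le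
        _ = _ := by
          rw [Finset.sum_const, Finset.card_univ, nsmul_eq_mul, ← hκ]
          field_simp
    have h3 : ∑ y ∈ S, X y ω = P.real G * S.card - cnt G S ω := by
      rw [cnt_eq_sum, Finset.sum_sub_distrib, Finset.sum_const, nsmul_eq_mul]
      ring
    rw [h3] at h2
    linarith
  have hone : ∀ c : Fin d → ZMod m,
      P.real {ω | ε * S.card / κ ≤ ∑ y ∈ S with res y = c, X y ω} ≤
        Real.exp (-(2 * ε ^ 2 / κ ^ 2) * S.card) := by
    intro c
    have h := HasSubgaussianMGF.measure_sum_ge_le_of_iIndepFun (hind c)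
      (s := S.subtype (fun y => res y = c)) (c := fun _ => (1 / 2) ^ 2)
      (fun y _ => hsub y.1) (ε := ε * S.card / κ) (by positivity)
    have e : ∀ ω, ∑ y ∈ S.subtype (fun y => res y = c), X y.1 ω =
        ∑ y ∈ S with res y = c, X y ω := fun ω =>
      Finset.sum_subtype_eq_sum_filter (fun y => X y ω)
    simp_rw [e] at h
    rcases (S.filter (fun y => res y = c)).eq_empty_or_nonempty with hemp | hne
    · rw [hemp]
      have : ¬ (ε * S.card / κ ≤ 0) := not_le.2 (by positivity)
      simp only [Finset.sum_empty, this]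
      simp [Real.exp_nonneg]
    · refine h.trans (Real.exp_le_exp.2 ?_)
      rw [Finset.sum_const, Finset.card_subtype]
      have hnpos : (0 : ℝ) < (S.filter (fun y => res y = c)).card := by exact_mod_cast hne.card_pos
      have hle : ((S.filter (fun y => res y = c)).card : ℝ) ≤ S.card := by
        exact_mod_cast Finset.card_filter_le _ _
      push_cast [nsmul_eq_mul]
      rw [neg_div, neg_mul, neg_le_neg_iff, le_div_iff₀ (by positivity)]
      have : (ε * S.card / κ) ^ 2 = 2 * ε ^ 2 / κ ^ 2 * S.card * (2 * (S.card * (1 / 2) ^ 2)) := by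
        field_simp
      rw [this]
      gcongr
  calc P.real {ω | cnt G S ω < (P.real G - ε) * S.card}
      ≤ P.real (⋃ c : Fin d → ZMod m,
        {ω | ε * S.card / κ ≤ ∑ y ∈ S with res y = c, X y ω}) := measureReal_mono hcov
    _ ≤ ∑ c : Fin d → ZMod m,
        P.real {ω | ε * S.card / κ ≤ ∑ y ∈ S with res y = c, X y ω} :=
      measureReal_iUnion_fintype_le _
    _ ≤ ∑ c : Fin d → ZMod m, Real.exp (-(2 * ε ^ 2 / κ ^ 2) * S.card) :=
      Finset.sum_le_sum fun c _ => hone c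
    _ = _ := by rw [Finset.sum_const, Finset.card_univ, nsmul_eq_mul]

end SRWPC
namespace SRWPC

lemma mem_bx_floor {x y : V d} {a : ℝ} (ha : 0 ≤ a) :
    y ∈ bx x ⌊a⌋₊ ↔ ∀ i, |(y i : ℝ) - (x i : ℝ)| ≤ a := by
  rw [mem_bx]
  refine forall_congr' fun i => ?_
  have e : |(y i : ℝ) - (x i : ℝ)| = ((y i - x i).natAbs : ℝ) := by
    rw [Nat.cast_natAbs]; push_cast; rfl
  rw [e, ← Nat.le_floor_iff ha, Int.abs_eq_natAbs]
  norm_cast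

lemma cnt_mono (F : Set (Config d)) {S T : Finset (V d)} (h : S ⊆ T) (ω : Config d) :
    cnt F S ω ≤ cnt F T ω := by
  classical
  unfold cnt
  exact_mod_cast Finset.card_le_card (Finset.filter_subset_filter _ h)

lemma cnt_diff (C G : Set (Config d)) (S : Finset (V d)) (ω : Config d) :
    cnt G S ω ≤ cnt C S ω + cnt (G \ C) S ω := by
  simp only [cnt_eq_sum]
  rw [← Finset.sum_add_distrib]
  refine Finset.sum_le_sum fun y _ => ?_
  by_cases h1 : shift y ω ∈ G <;> by_cases h2 : shift y ω ∈ C <;> simp [Set.indicator, h1, h2]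

lemma cnt_cluster (x : V d) {a : ℝ} (ha : 0 ≤ a) (ω : Config d) :
    (Set.ncard {y : V d | (∀ i, |(y i : ℝ) - (x i : ℝ)| ≤ a) ∧ memCluster ω y} : ℝ) =
      cnt (cluZero d) (bx x ⌊a⌋₊) ω := by
  classical
  unfold cnt
  rw [← Set.ncard_coe_finset]
  congr 2
  ext y
  simp [mem_bx_floor ha, shift_mem_cluZero]

lemma eventually_vol (δ : ℝ) (hδ : 0 < δ) (d : ℕ) :
    ∀ᶠ n : ℕ in atTop, 1 ≤ n ∧
      5 / 6 * (2 * δ * n) ^ d ≤ (2 * (⌊δ * n⌋₊ : ℝ) + 1) ^ d := by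
  have t1 : Tendsto (fun n : ℕ => 2 * δ * (n : ℝ)) atTop atTop :=
    tendsto_natCast_atTop_atTop.const_mul_atTop (by positivity)
  have t2 : Tendsto (fun n : ℕ => (1 - (2 * δ * (n : ℝ))⁻¹) ^ d) atTop (𝓝 1) := by
    have := ((tendsto_const_nhds (x := (1 : ℝ))).sub (tendsto_inv_atTop_zero.comp t1)).pow d
    simpa using this
  filter_upwards [eventually_ge_atTop 1, t1.eventually_ge_atTop 1,
    t2.eventually (lt_mem_nhds (show (5 / 6 : ℝ) < 1 by norm_num))] with n hn h1 h2
  refine ⟨hn, ?_⟩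
  have hpos : 0 < 2 * δ * (n : ℝ) := by linarith
  have hfl := Nat.lt_floor_add_one (δ * (n : ℝ))
  calc 5 / 6 * (2 * δ * n) ^ d ≤ (1 - (2 * δ * (n : ℝ))⁻¹) ^ d * (2 * δ * n) ^ d := by gcongr
    _ = (2 * δ * n - 1) ^ d := by
      rw [← mul_pow, sub_mul, inv_mul_cancel₀ hpos.ne', one_mul]
    _ ≤ _ := pow_le_pow_left₀ (by linarith) (by linarith) d

lemma summable_aux (δ : ℝ) (hδ : 0 < δ) (d : ℕ) (hd : 1 ≤ d) (K c : ℝ) (hc : 0 < c) (hK : 0 ≤ K) :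
    Summable fun n : ℕ => (2 * n + 1 : ℝ) ^ d *
      (K * Real.exp (-c * (2 * (⌊δ * n⌋₊ : ℝ) + 1) ^ d)) := by
  have s1 := Real.summable_pow_mul_exp_neg_nat_mul d (r := 2 * c * δ) (by positivity)
  have s2 := Real.summable_pow_mul_exp_neg_nat_mul 0 (r := 2 * c * δ) (by positivity)
  refine Summable.of_nonneg_of_le (fun n => by positivity) (fun n => ?_)
    ((s1.add s2).mul_left (3 ^ d * (K * Real.exp c)))
  have hfl := Nat.lt_floor_add_one (δ * (n : ℝ))
  have e1 : 2 * δ * n - 1 ≤ (2 * (⌊δ * n⌋₊ : ℝ) + 1) ^ d := by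
    have : (1 : ℝ) ≤ 2 * (⌊δ * n⌋₊ : ℝ) + 1 := by
      have : (0 : ℝ) ≤ ⌊δ * n⌋₊ := by positivity
      linarith
    have := le_self_pow₀ this (by omega : d ≠ 0)
    linarith
  have e2 : Real.exp (-c * (2 * (⌊δ * n⌋₊ : ℝ) + 1) ^ d) ≤
      Real.exp c * Real.exp (-(2 * c * δ) * n) := by
    rw [← Real.exp_add]
    refine Real.exp_le_exp.2 ?_
    nlinarith
  have e3 : (2 * n + 1 : ℝ) ^ d ≤ 3 ^ d * ((n : ℝ) ^ d + 1) := by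
    rcases Nat.eq_zero_or_pos n with rfl | hn
    · have : (1 : ℝ) ≤ 3 ^ d := one_le_pow₀ (by norm_num)
      have h0 : (0 : ℝ) ≤ 3 ^ d * ((0 : ℕ) : ℝ) ^ d := by positivity
      simp only [Nat.cast_zero, mul_zero, zero_add, one_pow] at *
      linarith
    · have hn' : (1 : ℝ) ≤ n := by exact_mod_cast hn
      calc (2 * n + 1 : ℝ) ^ d ≤ (3 * n) ^ d := pow_le_pow_left₀ (by positivity) (by linarith) d
        _ = 3 ^ d * (n : ℝ) ^ d := mul_pow _ _ _
        _ ≤ _ := by gcongr; linarith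
  calc _ ≤ (3 ^ d * ((n : ℝ) ^ d + 1)) * (K * (Real.exp c * Real.exp (-(2 * c * δ) * n))) := by
        gcongr
    _ = _ := by rw [pow_zero]; ring

lemma ae_local {p : ℝ} (hd : 1 ≤ d) (h0 : 0 < p) (h1 : p < 1) {P : Measure (Config d)}
    (hP : IsBernoulli d p P) {G : Set (Config d)}
    (hG : G ∈ measurableCylinders (fun _ : EdgeIx d => Bool)) {ε : ℝ} (hε : 0 < ε)
    {δ : ℝ} (hδ : 0 < δ) :
    ∀ᵐ ω ∂P, ∀ᶠ n : ℕ in atTop, ∀ x ∈ bx (0 : V d) n,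
      (P.real G - ε) * (bx x ⌊δ * n⌋₊).card ≤ cnt G (bx x ⌊δ * n⌋₊) ω := by
  have := hP.1
  obtain ⟨K, c, hc, hK, hb⟩ := conc h0 h1 hP hG hε
  let B : ℕ → Set (Config d) := fun n => ⋃ x ∈ bx (0 : V d) n,
    {ω | cnt G (bx x ⌊δ * n⌋₊) ω < (P.real G - ε) * (bx x ⌊δ * n⌋₊).card}
  have hB : ∀ n, P (B n) ≤ ENNReal.ofReal ((2 * n + 1 : ℝ) ^ d *
      (K * Real.exp (-c * (2 * (⌊δ * n⌋₊ : ℝ) + 1) ^ d))) := by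
    intro n
    rw [← ofReal_measureReal (measure_ne_top P (B n))]
    refine ENNReal.ofReal_le_ofReal ?_
    refine (measureReal_biUnion_finset_le _ _).trans ?_
    refine (Finset.sum_le_sum fun x _ => hb (bx x ⌊δ * n⌋₊)).trans (le_of_eq ?_)
    simp_rw [card_bx]
    rw [Finset.sum_const, card_bx, nsmul_eq_mul]
    push_cast
    rfl
  have hsum : ∑' n, P (B n) ≠ ∞ := by
    refine ne_top_of_le_ne_top ?_ (ENNReal.tsum_le_tsum hB)
    exact (summable_aux δ hδ d hd K c hc hK).tsum_ofReal_ne_top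
  filter_upwards [ae_eventually_notMem hsum] with ω hω
  filter_upwards [hω] with n hn x hx
  by_contra hcon
  exact hn (Set.mem_biUnion (x := x) hx (not_le.1 hcon))

end SRWPC
open SRWPC in
/-- **Density of the infinite cluster in balls** (Lemma 4.4). -/
theorem cluster_density_in_balls
    (d : ℕ) (hd : 2 ≤ d) (p : ℝ) (hp0 : 0 < p) (hp1 : p < 1) (hpc : pc d < p)
    (P : Measure (Config d)) (hP : IsBernoulli d p P)
    (δ : ℝ) (hδ : 0 < δ) :
    ∀ᵐ ω ∂P, ∃ N : ℕ, ∀ n : ℕ, N ≤ n → ∀ x : V d,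
      (∀ y : V d, (∀ i, |(y i : ℝ) - (x i : ℝ)| ≤ δ * n) → ∀ i, |(y i : ℝ)| ≤ n) →
      δ ^ d * (2 * n : ℝ) ^ d * (P (cluZero d)).toReal / 2 ≤
        (Set.ncard {y : V d | (∀ i, |(y i : ℝ) - (x i : ℝ)| ≤ δ * n) ∧ memCluster ω y} : ℝ) := by
  have := hP.1
  have hs := map_shift hp0 hp1 hP
  set θ : ℝ := (P (cluZero d)).toReal with hθ
  rcases (ENNReal.toReal_nonneg : 0 ≤ (P (cluZero d)).toReal).eq_or_lt with hz | hpos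
  · refine ae_of_all _ fun ω => ⟨0, fun n _ x _ => ?_⟩
    rw [hθ, ← hz]
    simp
  rw [← hθ] at hpos
  set lam : ℝ := θ / 8 * (δ / 2) ^ d with hlam
  have hlpos : 0 < lam := by positivity
  rw [ae_iff]
  set Bad := {ω : Config d | ¬ ∃ N : ℕ, ∀ n : ℕ, N ≤ n → ∀ x : V d,
      (∀ y : V d, (∀ i, |(y i : ℝ) - (x i : ℝ)| ≤ δ * n) → ∀ i, |(y i : ℝ)| ≤ n) →
      δ ^ d * (2 * n : ℝ) ^ d * θ / 2 ≤
        (Set.ncard {y : V d | (∀ i, |(y i : ℝ) - (x i : ℝ)| ≤ δ * n) ∧ memCluster ω y} : ℝ)}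
    with hBad
  have key : ∀ ε : ℝ, 0 < ε → ε ≤ θ / 8 → P Bad ≤ ENNReal.ofReal (10 ^ d * ε / lam) := by
    intro ε hε hε8
    have hdense := Measure.MeasureDense.of_generateFrom_isSetAlgebra_finite (μ := P)
      (isSetAlgebra_measurableCylinders (α := fun _ : EdgeIx d => Bool))
      generateFrom_measurableCylinders.symm
    obtain ⟨G, hG, hGε⟩ := hdense.approx (cluZero d) measurableSet_cluZero (measure_ne_top _ _) ε hε
    have mG := hdense.measurable G hG
    have mF : MeasurableSet (G \ cluZero d) := mG.diff measurableSet_cluZero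
    have hFε : P.real (G \ cluZero d) ≤ ε := by
      refine ENNReal.toReal_le_of_le_ofReal hε.le ((measure_mono ?_).trans hGε.le)
      exact Set.subset_union_right
    have hCε : P.real (cluZero d \ G) ≤ ε := by
      refine ENNReal.toReal_le_of_le_ofReal hε.le ((measure_mono ?_).trans hGε.le)
      exact Set.subset_union_left
    have hGθ : θ - ε ≤ P.real G := by
      have h1 : P.real (cluZero d) ≤ P.real (G ∪ (cluZero d \ G)) :=
        measureReal_mono (fun ω h => by
          by_cases h' : ω ∈ G
          · exact Or.inl h'
          · exact Or.inr ⟨h, h'⟩)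
      have h2 := measureReal_union_le (μ := P) G (cluZero d \ G)
      have h3 : P.real (cluZero d) = θ := rfl
      linarith
    have hloc := ae_local (by omega) hp0 hp1 hP hG (ε := θ / 8) (by positivity) hδ
    rw [ae_iff] at hloc
    have hsub : Bad ⊆ {ω | ∃ n : ℕ, lam * (2 * n + 1 : ℝ) ^ d < cnt (G \ cluZero d) (bx 0 n) ω} ∪
        {ω | ¬ ∀ᶠ n : ℕ in atTop, ∀ x ∈ bx (0 : V d) n,
          (P.real G - θ / 8) * (bx x ⌊δ * n⌋₊).card ≤ cnt G (bx x ⌊δ * n⌋₊) ω} := by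
      intro ω hω
      by_contra hcon
      simp only [Set.mem_union, Set.mem_setOf_eq, not_or, not_exists, not_lt, not_not] at hcon
      obtain ⟨hmax, hev⟩ := hcon
      apply hω
      obtain ⟨N, hN⟩ := eventually_atTop.1 (hev.and (eventually_vol δ hδ d))
      refine ⟨N, fun n hn x hx => ?_⟩
      obtain ⟨h1, hn1, hvol⟩ := hN n hn
      have hn1' : (1 : ℝ) ≤ n := by exact_mod_cast hn1
      have ha : 0 ≤ δ * n := by positivity
      rw [cnt_cluster x ha]
      have hincl : bx x ⌊δ * n⌋₊ ⊆ bx 0 n := by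
        intro y hy
        have h := hx y ((mem_bx_floor ha).1 hy)
        refine mem_bx.2 fun i => ?_
        have := h i
        simp only [Pi.zero_apply, sub_zero]
        exact_mod_cast this
      have hxm : x ∈ bx (0 : V d) n := hincl ((mem_bx_floor ha).2 fun i => by simpa using ha)
      have a1 := h1 x hxm
      have a2 := cnt_diff (cluZero d) G (bx x ⌊δ * n⌋₊) ω
      have a3 := (cnt_mono (G \ cluZero d) hincl ω).trans (hmax n)
      rw [card_bx] at a1
      push_cast at a1
      have a4 : lam * (2 * n + 1 : ℝ) ^ d ≤ θ / 8 * (2 * δ * n) ^ d := by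
        calc lam * (2 * n + 1 : ℝ) ^ d ≤ lam * (4 * n) ^ d := by
              gcongr
              linarith
          _ = θ / 8 * (2 * δ * n) ^ d := by
              rw [hlam, mul_assoc, ← mul_pow]
              congr 2
              ring
      have a5 : 3 / 4 * θ * (5 / 6 * (2 * δ * n) ^ d) ≤
          (P.real G - θ / 8) * (2 * (⌊δ * n⌋₊ : ℝ) + 1) ^ d := by
        refine mul_le_mul (by linarith) hvol (by positivity) (by linarith)
      have a6 : δ ^ d * (2 * n : ℝ) ^ d * θ / 2 = 1 / 2 * (θ * (2 * δ * n) ^ d) := by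
        rw [← mul_pow, show δ * (2 * (n : ℝ)) = 2 * δ * n by ring]
        ring
      rw [a6]
      linarith
    calc P Bad ≤ _ := measure_mono hsub
      _ ≤ _ := measure_union_le _ _
      _ ≤ ENNReal.ofReal (10 ^ d * P.real (G \ cluZero d) / lam) + 0 :=
        add_le_add (maximal hs mF hlpos) hloc.le
      _ ≤ _ := by
        rw [add_zero]
        refine ENNReal.ofReal_le_ofReal ?_
        gcongr
  by_contra hne
  have hr : 0 < P.real Bad := ENNReal.toReal_pos hne (measure_ne_top _ _)
  set ε : ℝ := min (θ / 8) (lam * P.real Bad / (2 * 10 ^ d)) with hε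
  have hεpos : 0 < ε := lt_min (by positivity) (by positivity)
  have h1 : P.real Bad ≤ 10 ^ d * ε / lam :=
    ENNReal.toReal_le_of_le_ofReal (by positivity) (key ε hεpos (min_le_left _ _))
  have h2 : ε ≤ lam * P.real Bad / (2 * 10 ^ d) := min_le_right _ _
  have h3 : 10 ^ d * ε / lam ≤ P.real Bad / 2 := by
    calc 10 ^ d * ε / lam ≤ 10 ^ d * (lam * P.real Bad / (2 * 10 ^ d)) / lam := by gcongr
      _ = _ := by field_simp
  linarith
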